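/- arXiv:1905.04785 — 2 statements merged into one kernel-verified Lean document; each statement's English description precedes it below -/
import Mathlib

section
/- Let n ≥ 3 be an integer. Then Σ_{k : ZMod n} #{ x : Fin n → ZMod n bijective | ∀ i : Fin n, x i = x (n - 1 - i) + k } equals n!! if n is even and 0 if n is odd. Moreover, the only value of k contributing a nonzero count is k = n/2 (for n even). -/
open Nat

theorem aux_cycleType {α : Type*} [Fintype α] [DecidableEq α] (m : ℕ)
    (hm : Fintype.card α = 2 * m) (σ : Equiv.Perm α) (h2 : ∀ a, σ (σ a) = a)
    (hf : ∀ a, σ a ≠ a) : σ.cycleType = Multiset.replicate m 2 := by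
  have h : σ ^ 2 = 1 := by
    ext a
    simp [pow_two, h2]
  have h1 := Equiv.Perm.cycleType_of_pow_prime_eq_one h
  have hs : σ.support = Finset.univ := by
    ext a
    simp [hf]
  have h3 := σ.sum_cycleType
  rw [hs, Finset.card_univ, hm, h1, Multiset.sum_replicate, smul_eq_mul] at h3
  rw [h1]
  congr 1
  omega

theorem aux_count {α : Type*} [Fintype α] [DecidableEq α] (m : ℕ) (hm0 : m ≠ 0)
    (hm : Fintype.card α = 2 * m) (σ τ : Equiv.Perm α)
    (h2 : ∀ a, σ (σ a) = a) (hf : ∀ a, σ a ≠ a)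
    (h2' : ∀ a, τ (τ a) = a) (hf' : ∀ a, τ a ≠ a) :
    Nat.card {p : Equiv.Perm α // ∀ a, p (σ a) = τ (p a)} = (2 * m)‼ := by
  have hσ := aux_cycleType m hm σ h2 hf
  have hτ := aux_cycleType m hm τ h2' hf'
  obtain ⟨c, hc⟩ := isConj_iff.1 (Equiv.Perm.isConj_of_cycleType_eq (hσ.trans hτ.symm))
  have hc' : c * σ = τ * c := by rw [← hc]; group
  have e : {p : Equiv.Perm α // ∀ a, p (σ a) = τ (p a)} ≃ Subgroup.centralizer {σ} := by
    refine (Equiv.mulLeft c⁻¹).subtypeEquiv fun p => ?_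
    have : (∀ a, p (σ a) = τ (p a)) ↔ p * σ = τ * p := by
      rw [Equiv.ext_iff]; rfl
    rw [this, Subgroup.mem_centralizer_singleton_iff, Equiv.coe_mulLeft, ← hc]
    constructor
    · intro h
      rw [mul_assoc, h]; group
    · intro h
      have := congrArg (c * ·) h
      simpa [mul_assoc] using this
  rw [Nat.card_congr e, Equiv.Perm.nat_card_centralizer, hσ, doubleFactorial_two_mul]
  simp [hm, Multiset.toFinset_replicate, hm0, mul_comm]

theorem aux_val (n : ℕ) (hn : 3 ≤ n) [NeZero n] (k : ZMod n) (x : Fin n → ZMod n)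
    (hb : Function.Bijective x) (hx : ∀ i : Fin n, x i = x i.rev + k) : 2 * k.val = n := by
  have h0 := hx ⟨0, by omega⟩
  have h1 := hx (Fin.rev ⟨0, by omega⟩)
  rw [Fin.rev_rev] at h1
  have hkk : k + k = 0 := by
    rw [h1, add_assoc] at h0
    simpa using h0
  have hk : k ≠ 0 := by
    rintro rfl
    rw [add_zero] at h0
    have := hb.1 h0
    simp [Fin.ext_iff, Fin.val_rev] at this
    omega
  have hlt := ZMod.val_lt k
  have hv : k.val ≠ 0 := by simpa [ZMod.val_eq_zero] using hk
  have hd : n ∣ k.val + k.val := by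
    rw [← ZMod.natCast_eq_zero_iff]
    simpa using hkk
  obtain ⟨c, hc⟩ := hd
  have : c < 2 := by
    by_contra h
    have : n * 2 ≤ n * c := Nat.mul_le_mul_left _ (by omega)
    omega
  interval_cases c <;> omega

theorem aux_half (n : ℕ) [NeZero n] (k : ZMod n) (h : 2 * k.val = n) :
    k = ((n / 2 : ℕ) : ZMod n) := by
  have : n / 2 = k.val := by omega
  rw [this, ZMod.natCast_zmod_val]

theorem aux_even (n m : ℕ) (hm0 : m ≠ 0) (hnm : n = 2 * m) [NeZero n] :
    Nat.card {x : Fin n → ZMod n // Function.Bijective x ∧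
          ∀ i : Fin n, x i = x i.rev + (m : ZMod n)} = n‼ := by
  have hkk : (m : ZMod n) + m = 0 := by
    rw [← Nat.cast_add, ZMod.natCast_eq_zero_iff]
    exact ⟨1, by omega⟩
  have hk : (m : ZMod n) ≠ 0 := by
    rw [Ne, ZMod.natCast_eq_zero_iff]
    intro h
    have := Nat.le_of_dvd (by omega) h
    omega
  let f : ZMod n ≃ Fin n := Fintype.equivFinOfCardEq (ZMod.card n)
  let τ : Equiv.Perm (Fin n) := (f.symm.trans (Equiv.addRight (m : ZMod n))).trans f
  have hτ : ∀ a, τ a = f (f.symm a + m) := fun a => rfl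
  have key := aux_count m hm0 (by simp [hnm]) Fin.revPerm τ (by simp)
    (by
      intro a h
      simp [Fin.ext_iff, Fin.val_rev] at h
      omega)
    (by intro a; simp [hτ, add_assoc, hkk])
    (by
      intro a h
      rw [hτ, ← Equiv.eq_symm_apply] at h
      simp [hk] at h)
  rw [← hnm] at key
  rw [← key]
  have hp : ∀ p : {p : Equiv.Perm (Fin n) // ∀ a, p (Fin.revPerm a) = τ (p a)},
      ∀ i : Fin n, f.symm (p.1 i) = f.symm (p.1 i.rev) + (m : ZMod n) := by
    intro p i
    have := p.2 i.rev
    rw [hτ] at this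
    simp at this
    simp [this]
  refine (Nat.card_congr (Equiv.ofBijective
    (fun p => ⟨fun i => f.symm (p.1 i), f.symm.bijective.comp p.1.bijective, hp p⟩)
    ⟨?_, ?_⟩)).symm
  · intro p q h
    ext i : 2
    have := congrFun (congrArg Subtype.val h) i
    simpa using this
  · rintro ⟨x, hb, hx⟩
    refine ⟨⟨(Equiv.ofBijective x hb).trans f, ?_⟩, ?_⟩
    · intro i
      rw [hτ]
      have := hx i.rev
      rw [Fin.rev_rev] at this
      simp [this]
    · ext i
      simp

/-- The total number of strings fixed by the elements `(v, r^k)` (reverse the string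
and add `k` to every label) is `n!!` if `n` is even and `0` if `n` is odd; moreover
only `k = n/2` contributes a nonzero count. -/
theorem fixed_strings_v_rk (n : ℕ) (hn : 3 ≤ n) [NeZero n] :
    (∑ k : ZMod n,
        Nat.card {x : Fin n → ZMod n // Function.Bijective x ∧
          ∀ i : Fin n, x i = x i.rev + k} =
      if Even n then Nat.doubleFactorial n else 0) ∧
    ∀ k : ZMod n,
      Nat.card {x : Fin n → ZMod n // Function.Bijective x ∧
          ∀ i : Fin n, x i = x i.rev + k} ≠ 0 →
        k = ((n / 2 : ℕ) : ZMod n) := by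
  have hval : ∀ k : ZMod n,
      Nat.card {x : Fin n → ZMod n // Function.Bijective x ∧
          ∀ i : Fin n, x i = x i.rev + k} ≠ 0 → 2 * k.val = n := by
    intro k h
    obtain ⟨⟨x, hb, hx⟩⟩ := (Nat.card_ne_zero.1 h).1
    exact aux_val n hn k x hb hx
  refine ⟨?_, fun k h => aux_half n k (hval k h)⟩
  split_ifs with he
  · obtain ⟨m, hm⟩ := he
    rw [Finset.sum_eq_single ((n / 2 : ℕ) : ZMod n)]
    · have : n / 2 = m := by omega
      rw [this]
      exact aux_even n m (by omega) (by omega)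
    · intro k _ hk
      by_contra h
      exact hk (aux_half n k (hval k h))
    · simp
  · apply Finset.sum_eq_zero
    intro k _
    by_contra h
    exact he ⟨k.val, by have := hval k h; omega⟩
end

section
/- Let n ≥ 3 be an integer. Then Σ_{m : ZMod n} Σ_{k : ZMod n} #{ x : ZMod n → ZMod n bijective | ∀ i : ZMod n, x i = x (m - (i + 1)) + k } equals (n/2) * n!! if n is even and 0 if n is odd. -/
open Nat

lemma aux_cycleType_s14 {α : Type*} [Fintype α] [DecidableEq α] (g : Equiv.Perm α)
    (h2 : ∀ i, g (g i) = i) (h1 : ∀ i, g i ≠ i) (h : ℕ) (hc : Fintype.card α = 2 * h) :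
    g.cycleType = Multiset.replicate h 2 := by
  have hp : g ^ 2 = 1 := by
    ext i; simp [pow_two, h2]
  have ha := (Equiv.Perm.pow_prime_eq_one_iff (p := 2)).1 hp
  have hr := Multiset.eq_replicate_card.2 ha
  have hs := g.sum_cycleType
  have hsup : g.support = Finset.univ := by
    ext i; simp [h1]
  rw [hsup, Finset.card_univ, hc, hr, Multiset.sum_replicate, smul_eq_mul] at hs
  rw [hr]
  congr 1
  omega

lemma aux_count_s14 {α : Type*} [Fintype α] [DecidableEq α] (g t : Equiv.Perm α)
    (hg2 : ∀ i, g (g i) = i) (hg1 : ∀ i, g i ≠ i)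
    (ht2 : ∀ i, t (t i) = i) (ht1 : ∀ i, t i ≠ i)
    (h : ℕ) (hpos : 0 < h) (hc : Fintype.card α = 2 * h) :
    Nat.card {x : α → α // Function.Bijective x ∧ ∀ i, x i = t (x (g i))}
      = Nat.doubleFactorial (2 * h) := by
  have hcg := aux_cycleType_s14 g hg2 hg1 h hc
  have hct := aux_cycleType_s14 t ht2 ht1 h hc
  obtain ⟨c, hcc⟩ := isConj_iff.1 ((Equiv.Perm.isConj_iff_cycleType_eq).2 (hcg.trans hct.symm))
  have hcent := Equiv.Perm.nat_card_centralizer g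
  rw [hcg] at hcent
  have e1 : (Multiset.replicate h 2).toFinset = {2} := by
    ext a; rw [Multiset.mem_toFinset, Multiset.mem_replicate, Finset.mem_singleton]; omega
  rw [e1, hc] at hcent
  simp only [Multiset.sum_replicate, Multiset.prod_replicate, Finset.prod_singleton,
    Multiset.count_replicate_self, smul_eq_mul] at hcent
  rw [Nat.doubleFactorial_two_mul]
  have : h * 2 = 2 * h := by ring
  rw [this, Nat.sub_self, Nat.factorial_zero, one_mul] at hcent
  rw [← hcent]
  have hc1 : ∀ i, c (g i) = t (c i) := by
    intro i; rw [← hcc]; simp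
  symm
  refine Nat.card_congr (Equiv.ofBijective
    (fun z => ⟨fun i => c (z.1 i), (c.bijective.comp z.1.bijective), ?_⟩) ⟨?_, ?_⟩)
  · intro i
    have hz := Subgroup.mem_centralizer_singleton_iff.1 z.2
    have hz' : z.1 (g i) = g (z.1 i) := by
      simpa using congrArg (fun p : Equiv.Perm α => p i) hz
    change c (z.1 i) = t (c (z.1 (g i)))
    rw [hz', hc1, ht2]
  · intro z w hzw
    apply Subtype.ext
    ext i
    have := congrFun (congrArg Subtype.val hzw) i
    exact c.injective this
  · rintro ⟨x, hx, hxx⟩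
    refine ⟨⟨c⁻¹ * Equiv.ofBijective x hx, ?_⟩, ?_⟩
    · rw [Subgroup.mem_centralizer_singleton_iff]
      ext i
      apply c.injective
      simp only [Equiv.Perm.mul_apply, hc1, Equiv.ofBijective_apply]
      rw [hxx i]
      simp [ht2]
    · apply Subtype.ext
      funext i
      simp

lemma aux_even_s14 (h : ℕ) : ((Finset.range (2 * h)).filter Even).card = h := by
  induction h with
  | zero => simp
  | succ h ih =>
    rw [show 2 * (h + 1) = 2 * h + 1 + 1 by ring, Finset.range_add_one, Finset.range_add_one,
      Finset.filter_insert, Finset.filter_insert]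
    simp [ih, Nat.even_add_one]

lemma aux_sum (h : ℕ) [NeZero (2 * h)] :
    ((Finset.univ : Finset (ZMod (2 * h))).filter (fun m => Even m.val)).card = h := by
  conv_rhs => rw [← aux_even_s14 h]
  refine Finset.card_bij (fun m _ => m.val) ?_ ?_ ?_
  · intro m hm
    simpa [ZMod.val_lt] using hm
  · intro a _ b _ hab
    exact ZMod.val_injective _ hab
  · intro b hb
    simp only [Finset.mem_filter, Finset.mem_range] at hb
    exact ⟨(b : ZMod (2 * h)), by simp [ZMod.val_cast_of_lt hb.1, hb.2],
      ZMod.val_cast_of_lt hb.1⟩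

lemma aux_odd (h : ℕ) [NeZero (2 * h)] (m : ZMod (2 * h)) :
    Even m.val ↔ ∀ i, m - (i + 1) ≠ i := by
  constructor
  · intro he i hi
    have hm : m = i + i + 1 := by
      linear_combination hi
    have := congrArg (ZMod.castHom (Dvd.intro h rfl : 2 ∣ 2 * h) (ZMod 2)) hm
    rw [map_add, map_add, map_one, CharTwo.add_self_eq_zero, zero_add, ZMod.castHom_apply,
      ZMod.cast_eq_val, (ZMod.natCast_eq_zero_iff_even).2 he] at this
    exact absurd this (by decide)
  · intro hi
    by_contra ho
    obtain ⟨j, hj⟩ := Nat.not_even_iff_odd.1 ho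
    apply hi (j : ZMod (2 * h))
    rw [← ZMod.natCast_zmod_val m, hj]
    push_cast
    ring

lemma aux_k (n : ℕ) (hn : 3 ≤ n) [NeZero n] (m k : ZMod n) (x : ZMod n → ZMod n)
    (hb : Function.Bijective x) (hx : ∀ i : ZMod n, x i = x (m - (i + 1)) + k) :
    2 * k.val = n ∧ ∀ i, m - (i + 1) ≠ i := by
  have hk0 : k ≠ 0 := by
    rintro rfl
    have h (i : ZMod n) : i = m - (i + 1) := hb.1 (by simpa using hx i)
    have h0 := h 0
    have h1 := h 1
    have h2 : ((2 : ℕ) : ZMod n) = 0 := by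
      push_cast
      linear_combination h1 - h0
    rw [ZMod.natCast_eq_zero_iff] at h2
    have := Nat.le_of_dvd (by norm_num) h2
    omega
  constructor
  · have h0 := hx 0
    have h1 := hx (m - (0 + 1))
    rw [show m - (m - (0 + 1) + 1) = 0 by ring] at h1
    have : -k = k := by linear_combination h0 + h1
    exact ((ZMod.neg_eq_self_iff k).1 this).resolve_left hk0
  · intro i hi
    have := hx i
    rw [hi] at this
    exact hk0 (by linear_combination -this)

/-- The total number of strings fixed by the elements `(c^m v, r^k)` (reverse,
cyclically shift by `m`, and add `k` to every label) is `(n/2)·n!!` if `n` is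
even and `0` if `n` is odd. -/
theorem total_fixed_strings_cmv_rk (n : ℕ) (hn : 3 ≤ n) [NeZero n] :
    ∑ m : ZMod n, ∑ k : ZMod n,
        Nat.card {x : ZMod n → ZMod n // Function.Bijective x ∧
          ∀ i : ZMod n, x i = x (m - (i + 1)) + k} =
      if Even n then (n / 2) * Nat.doubleFactorial n else 0 := by
  have hzero (m k : ZMod n) (hmk : ¬ (2 * k.val = n ∧ ∀ i, m - (i + 1) ≠ i)) :
      Nat.card {x : ZMod n → ZMod n // Function.Bijective x ∧
          ∀ i : ZMod n, x i = x (m - (i + 1)) + k} = 0 := by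
    rw [Nat.card_eq_zero]
    left
    exact ⟨fun x => hmk (aux_k n hn m k x.1 x.2.1 x.2.2)⟩
  split_ifs with he
  · obtain ⟨h, hh⟩ := he.two_dvd
    subst hh
    have hval : ((h : ℕ) : ZMod (2 * h)).val = h := ZMod.val_cast_of_lt (by omega)
    have hinner (m : ZMod (2 * h)) : ∑ k : ZMod (2 * h),
        Nat.card {x : ZMod (2 * h) → ZMod (2 * h) // Function.Bijective x ∧
          ∀ i, x i = x (m - (i + 1)) + k} =
        if Even m.val then Nat.doubleFactorial (2 * h) else 0 := by
      rw [Finset.sum_eq_single (h : ZMod (2 * h))]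
      · split_ifs with hm
        · rw [aux_odd] at hm
          have hh0 : (h : ZMod (2 * h)) + h = 0 := by
            have := ZMod.natCast_self (2 * h)
            push_cast at this
            linear_combination this
          refine aux_count_s14
            (Function.Involutive.toPerm (fun i => m - (i + 1)) (fun i => by ring))
            (Equiv.addRight (h : ZMod (2 * h))) ?_ ?_ ?_ ?_ h (by omega) (ZMod.card _)
          · intro i
            change m - (m - (i + 1) + 1) = i
            ring
          · exact hm
          · intro i
            change i + h + h = i
            rw [add_assoc, hh0, add_zero]
          · intro i hi
            change i + h = i at hi
            have : (h : ZMod (2 * h)) = 0 := by linear_combination hi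
            rw [this, ZMod.val_zero] at hval
            omega
        · apply hzero
          rw [← aux_odd]
          tauto
      · intro k _ hk
        apply hzero
        rintro ⟨h1, -⟩
        apply hk
        apply ZMod.val_injective
        rw [hval]
        omega
      · simp
    simp only [hinner]
    rw [← Finset.sum_filter, Finset.sum_const, aux_sum, smul_eq_mul,
      Nat.mul_div_cancel_left _ (by norm_num)]
  · refine Finset.sum_eq_zero fun m _ => Finset.sum_eq_zero fun k _ => hzero m k ?_
    rintro ⟨h, -⟩
    exact he ⟨k.val, by omega⟩
end
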